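/- Let K be a number field of degree 6 over ℚ that is a CM field, i.e., K is totally complex (no embedding K → ℂ has image contained in ℝ) and contains a totally real subfield K₊ with [K₊:ℚ] = 3. Let μ be an algebraic integer of K such that K = ℚ(μ) and μ² ∈ K₊ (equivalently, φ(μ²) is real for every embedding φ : K → ℂ). Then B := −(1/2)·Tr_{K/ℚ}(μ²) is a rational integer and B ≥ 2. -/

import Mathlib

open Module

/-!
Every complex embedding `φ` sends `μ` to a non-real number with real square, so `φ (-μ²) > 0` and
the algebraic integer `-μ²` is totally positive. Its norm is therefore a positive integer, and the
inequality between the arithmetic and geometric means bounds its trace `2B` below by the degree of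
`K`. The trace is even because `K` is quadratic over `ℚ(μ²)`.
-/

section

open IntermediateField
open scoped ComplexOrder

theorem card_le_sum_of_one_le_prod {ι : Type*} (s : Finset ι) {r : ι → ℝ}
    (hr : ∀ i ∈ s, 0 < r i) (hprod : 1 ≤ ∏ i ∈ s, r i) : (s.card : ℝ) ≤ ∑ i ∈ s, r i := by
  have hlog : ∑ i ∈ s, Real.log (r i) ≤ ∑ i ∈ s, (r i - 1) :=
    Finset.sum_le_sum fun i hi ↦ Real.log_le_sub_one_of_pos (hr i hi)
  rw [← Real.log_prod fun i hi ↦ (hr i hi).ne', Finset.sum_sub_distrib, Finset.sum_const,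
    nsmul_one] at hlog
  linarith [Real.log_nonneg hprod]

theorem neg_sq_pos_of_im_ne_zero {z : ℂ} (hsq : (z ^ 2).im = 0) (hz : z.im ≠ 0) :
    0 < -z ^ 2 := by
  have hre : z.re = 0 := by
    rw [pow_two, Complex.mul_im] at hsq
    exact (mul_eq_zero.1 (show z.re * z.im = 0 by linarith)).resolve_right hz
  have hz0 : z ≠ 0 := fun h ↦ hz (by simp [h])
  exact neg_pos.2 ((Complex.sq_nonpos_iff.2 hre).lt_of_ne (pow_ne_zero 2 hz0))

section FieldExtension

variable {F L : Type*} [Field F] [Field L] [Algebra F L]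

theorem finrank_eq_two_of_sq_mem {E : IntermediateField F L} {x : L} (hx : F⟮x⟯ = ⊤)
    (hxE : x ∉ E) (hsq : x ^ 2 ∈ E) : finrank E L = 2 := by
  let p : Polynomial E := .X ^ 2 - .C ⟨x ^ 2, hsq⟩
  have hp : p.Monic := Polynomial.monic_X_pow_sub_C _ two_ne_zero
  have hpx : Polynomial.aeval x p = 0 := by simp [p, IntermediateField.algebraMap_apply]
  have hint : IsIntegral E x := ⟨p, hp, hpx⟩
  have hle : (minpoly E x).natDegree ≤ 2 := by
    simpa [p] using Polynomial.natDegree_le_of_dvd (minpoly.dvd E x hpx) hp.ne_zero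
  have hge : 2 ≤ (minpoly E x).natDegree :=
    (minpoly.two_le_natDegree_iff hint).2 (by simpa using hxE)
  rw [← finrank_top', ← adjoin_eq_top_of_adjoin_eq_top F hx, adjoin.finrank hint]
  exact hle.antisymm hge

theorem exists_trace_eq_finrank_mul_algebraMap {A : Type*} [CommRing A] [Algebra A F]
    [IsIntegrallyClosed A] [IsFractionRing A F] [Algebra A L] [IsScalarTower A F L]
    [FiniteDimensional F L] (E : IntermediateField F L) {x : L} (hxE : x ∈ E)
    (hx : IsIntegral A x) : ∃ a : A, Algebra.trace F L x = finrank E L * algebraMap A F a := by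
  have : IsScalarTower A E L := .of_algebraMap_eq fun _ ↦ rfl
  have hint : IsIntegral A (⟨x, hxE⟩ : E) :=
    (isIntegral_algebraMap_iff (algebraMap E L).injective).1 hx
  obtain ⟨a, ha⟩ := IsIntegrallyClosed.isIntegral_iff.1 (Algebra.isIntegral_trace (L := F) hint)
  refine ⟨a, ?_⟩
  calc Algebra.trace F L x
      = Algebra.trace F E (Algebra.trace E L (algebraMap E L ⟨x, hxE⟩)) :=
        (Algebra.trace_trace _).symm
    _ = finrank E L * algebraMap A F a := by
        rw [Algebra.trace_algebraMap, map_nsmul, nsmul_eq_mul, ← ha]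

end FieldExtension

section NumberField

variable {K : Type*} [Field K]

theorem im_eq_zero_of_mem_adjoin [CharZero K] (φ : K →+* ℂ) {S : Set K}
    (hS : ∀ x ∈ S, (φ x).im = 0) {y : K} (hy : y ∈ adjoin ℚ S) : (φ y).im = 0 := by
  induction hy using adjoin_induction with
  | mem x hx => exact hS x hx
  | algebraMap q => simp
  | add x y _ _ hx hy => simp [hx, hy]
  | inv x _ hx => simp [hx]
  | mul x y _ _ hx hy => simp [hx, hy]

variable [NumberField K]

theorem one_le_norm_of_isIntegral_of_pos {x : K} (hx : IsIntegral ℤ x)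
    (hpos : ∀ φ : K →+* ℂ, 0 < φ x) : 1 ≤ Algebra.norm ℚ x := by
  have hnorm : 0 < Algebra.norm ℚ x := by
    have h : (0 : ℂ) < Algebra.norm ℚ x := by
      rw [← eq_ratCast (algebraMap ℚ ℂ), Algebra.norm_eq_prod_embeddings ℚ ℂ x]
      exact Finset.prod_pos fun φ _ ↦ hpos φ
    exact Rat.cast_pos.1 (Complex.zero_lt_real.1 (by simpa using h))
  obtain ⟨n, hn⟩ := IsIntegrallyClosed.isIntegral_iff.1 (Algebra.isIntegral_norm ℚ hx)
  rw [← hn, eq_intCast] at hnorm ⊢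
  exact_mod_cast hnorm

theorem finrank_le_trace_of_isIntegral_of_pos {x : K} (hx : IsIntegral ℤ x)
    (hpos : ∀ φ : K →+* ℂ, 0 < φ x) : (finrank ℚ K : ℚ) ≤ Algebra.trace ℚ K x := by
  have hreal (φ : K →ₐ[ℚ] ℂ) : ∃ r : ℝ, 0 < r ∧ (r : ℂ) = φ x :=
    RCLike.pos_iff_exists_ofReal.1 (hpos φ)
  choose r hrpos hr using hreal
  have hprod : (Algebra.norm ℚ x : ℝ) = ∏ φ, r φ := by
    apply Complex.ofReal_injective
    simpa [hr] using Algebra.norm_eq_prod_embeddings ℚ ℂ x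
  have hsum : (Algebra.trace ℚ K x : ℝ) = ∑ φ, r φ := by
    apply Complex.ofReal_injective
    simpa [hr] using trace_eq_sum_embeddings (K := ℚ) ℂ (x := x)
  have hone : (1 : ℝ) ≤ ∏ φ, r φ := by
    rw [← hprod]
    exact_mod_cast one_le_norm_of_isIntegral_of_pos hx hpos
  have hcard := card_le_sum_of_one_le_prod Finset.univ (fun φ _ ↦ hrpos φ) hone
  rw [← hsum, Finset.card_univ, AlgHom.card] at hcard
  exact_mod_cast hcard

end NumberField

theorem stmt_0_general {K : Type*} [Field K] [NumberField K]
    (hKcomplex : ∀ φ : K →+* ℂ, ∃ x : K, (φ x).im ≠ 0)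
    {μ : K} (hμint : IsIntegral ℤ μ) (hgen : ℚ⟮μ⟯ = ⊤)
    (hμ2 : ∀ φ : K →+* ℂ, (φ (μ ^ 2)).im = 0) :
    ∃ B : ℤ, (B : ℚ) = -(1/2) * Algebra.trace ℚ K (μ ^ 2) ∧ finrank ℚ K ≤ 2 * B := by
  have him (φ : K →+* ℂ) : (φ μ).im ≠ 0 := fun h ↦ by
    obtain ⟨x, hx⟩ := hKcomplex φ
    exact hx (im_eq_zero_of_mem_adjoin φ (S := {μ}) (by simpa using h) (hgen ▸ mem_top))
  have hquad : finrank ℚ⟮μ ^ 2⟯ K = 2 := by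
    obtain ⟨φ⟩ : Nonempty (K →+* ℂ) := inferInstance
    refine finrank_eq_two_of_sq_mem hgen (fun hμ ↦ him φ ?_) (mem_adjoin_simple_self ℚ _)
    exact im_eq_zero_of_mem_adjoin φ (by simpa using hμ2 φ) hμ
  have hpos (φ : K →+* ℂ) : 0 < φ (-μ ^ 2) := by
    simpa using neg_sq_pos_of_im_ne_zero (by simpa using hμ2 φ) (him φ)
  obtain ⟨b, hb⟩ :=
    exists_trace_eq_finrank_mul_algebraMap ℚ⟮μ ^ 2⟯ (mem_adjoin_simple_self ℚ _) (hμint.pow 2)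
  have hle := finrank_le_trace_of_isIntegral_of_pos (hμint.pow 2).neg hpos
  rw [hquad, eq_intCast] at hb
  rw [map_neg, hb] at hle
  refine ⟨-b, by rw [hb]; push_cast; ring, ?_⟩
  rw [mul_neg]
  exact_mod_cast hle

end

/-- Lemma `lem:Bnot1`. Let `K` be a sextic CM field: a number field of
degree 6 over `ℚ`, totally complex, containing a totally real subfield `K₊` of degree 3.
Let `μ` be an algebraic integer of `K` with `K = ℚ(μ)` and `μ² ∈ K₊`. Then
`B = -(1/2)·Tr_{K/ℚ}(μ²)` is a rational integer with `B ≥ 2`. -/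
theorem stmt_0
    (K : Type*) [Field K] [NumberField K]
    (hK6 : finrank ℚ K = 6)
    (hKcomplex : ∀ φ : K →+* ℂ, ∃ x : K, (φ x).im ≠ 0)
    (Kp : IntermediateField ℚ K)
    (hKp3 : finrank ℚ Kp = 3)
    (hKpreal : ∀ φ : K →+* ℂ, ∀ x ∈ Kp, (φ x).im = 0)
    (μ : K)
    (hμint : IsIntegral ℤ μ)
    (hgen : IntermediateField.adjoin ℚ {μ} = ⊤)
    (hμ2 : μ ^ 2 ∈ Kp) :
    ∃ B : ℤ, (B : ℚ) = -(1/2) * Algebra.trace ℚ K (μ ^ 2) ∧ 2 ≤ B := by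
  obtain ⟨B, hB, hle⟩ := stmt_0_general hKcomplex hμint hgen fun φ ↦ hKpreal φ _ hμ2
  exact ⟨B, hB, by omega⟩
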